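/- Let (g, [·,·], α) be a multiplicative Hom-Lie algebra over a field K with α surjective, and let I be an ideal of g. Then for every r ≥ 0 the term C^r(I) of the central descending series of I (C^0(I) = I, C^{r+1}(I) = [I, C^r(I)]) is an ideal of g; that is, [g, C^r(I)] ⊆ C^r(I) and α(C^r(I)) ⊆ C^r(I). -/

import Mathlib

/-- The span of brackets of elements of `A` with elements of `C`. -/
def homLieBracketSpan {K g : Type*} [Field K] [AddCommGroup g] [Module K g]
    (B : g →ₗ[K] g →ₗ[K] g) (A C : Submodule K g) : Submodule K g :=
  Submodule.span K {z | ∃ a ∈ A, ∃ c ∈ C, z = B a c}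

/-- The central descending series of an ideal `I` :
`C^0(I) = I`, `C^{r+1}(I) = [I, C^r(I)]`. -/
def homLieCentralSeriesOf {K g : Type*} [Field K] [AddCommGroup g] [Module K g]
    (B : g →ₗ[K] g →ₗ[K] g) (I : Submodule K g) : ℕ → Submodule K g
  | 0 => I
  | r + 1 => homLieBracketSpan B I (homLieCentralSeriesOf B I r)

/-!
In derivation form the Hom-Jacobi identity reads `[α u, [a, c]] = [[u, a], α c] + [α a, [u, c]]`.
If `I` and `J` are ideals and `a ∈ I`, `c ∈ J`, both terms on the right lie in `[I, J]`, so
`[I, J]` is stable under bracketing with the image of `α`. It is also stable under bracketing with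
`I`, because `[I, J] ⊆ J`. Hence `[I, J]` is an ideal as soon as `I` and the image of `α` together
span `g`, and the central series of `I` is obtained by iterating `J ↦ [I, J]`.
-/

section HomLieIdeal

variable {R g : Type*} [CommRing R] [AddCommGroup g] [Module R g]
  {B : g →ₗ[R] g →ₗ[R] g} {α : g →ₗ[R] g} {I J : Submodule R g}

/-- Ideals of a Hom-Lie algebra with bracket `B` and structure map `α`. Only the two stability
conditions are recorded; the Hom-Lie axioms are hypotheses of the lemmas that need them. -/
structure IsHomLieIdeal (B : g →ₗ[R] g →ₗ[R] g) (α : g →ₗ[R] g) (I : Submodule R g) : Prop where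
  bracket_mem : ∀ x : g, ∀ y ∈ I, B x y ∈ I
  map_mem : ∀ y ∈ I, α y ∈ I

theorem hom_leibniz (hskew : ∀ x y, B x y = -B y x)
    (hjac : ∀ x y z, B (α x) (B y z) + B (α y) (B z x) + B (α z) (B x y) = 0) (x y z : g) :
    B (α x) (B y z) = B (B x y) (α z) + B (α y) (B x z) := by
  have h := hjac x y z
  rw [hskew z x, map_neg, hskew (α z)] at h
  rw [← sub_eq_zero, ← h]
  abel

namespace IsHomLieIdeal

theorem map_mem_map₂ (hI : IsHomLieIdeal B α I) (hJ : IsHomLieIdeal B α J)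
    (hmul : ∀ x y, α (B x y) = B (α x) (α y)) :
    ∀ y ∈ Submodule.map₂ B I J, α y ∈ Submodule.map₂ B I J := by
  suffices Submodule.map₂ B I J ≤ (Submodule.map₂ B I J).comap α from this
  refine Submodule.map₂_le.mpr fun a ha c hc => ?_
  rw [Submodule.mem_comap, hmul]
  exact Submodule.apply_mem_map₂ B (hI.map_mem a ha) (hJ.map_mem c hc)

theorem bracket_map_mem_map₂ (hI : IsHomLieIdeal B α I) (hJ : IsHomLieIdeal B α J)
    (hskew : ∀ x y, B x y = -B y x)
    (hjac : ∀ x y z, B (α x) (B y z) + B (α y) (B z x) + B (α z) (B x y) = 0) (u : g) :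
    ∀ y ∈ Submodule.map₂ B I J, B (α u) y ∈ Submodule.map₂ B I J := by
  suffices Submodule.map₂ B I J ≤ (Submodule.map₂ B I J).comap (B (α u)) from this
  refine Submodule.map₂_le.mpr fun a ha c hc => ?_
  rw [Submodule.mem_comap, hom_leibniz hskew hjac]
  exact add_mem (Submodule.apply_mem_map₂ B (hI.bracket_mem u a ha) (hJ.map_mem c hc))
    (Submodule.apply_mem_map₂ B (hI.map_mem a ha) (hJ.bracket_mem u c hc))

theorem map₂_le_right (hJ : IsHomLieIdeal B α J) : Submodule.map₂ B I J ≤ J :=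
  Submodule.map₂_le.mpr fun a _ c hc => hJ.bracket_mem a c hc

protected theorem map₂ (hI : IsHomLieIdeal B α I) (hJ : IsHomLieIdeal B α J)
    (hskew : ∀ x y, B x y = -B y x)
    (hjac : ∀ x y z, B (α x) (B y z) + B (α y) (B z x) + B (α z) (B x y) = 0)
    (hmul : ∀ x y, α (B x y) = B (α x) (α y))
    (hspan : I ⊔ LinearMap.range α = ⊤) :
    IsHomLieIdeal B α (Submodule.map₂ B I J) where
  bracket_mem x y hy := by
    have hx : x ∈ I ⊔ LinearMap.range α := hspan ▸ Submodule.mem_top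
    obtain ⟨a, ha, _, ⟨u, rfl⟩, rfl⟩ := Submodule.mem_sup.mp hx
    rw [map_add, LinearMap.add_apply]
    exact add_mem (Submodule.apply_mem_map₂ B ha (hJ.map₂_le_right hy))
      (hI.bracket_map_mem_map₂ hJ hskew hjac u y hy)
  map_mem := hI.map_mem_map₂ hJ hmul

end IsHomLieIdeal

theorem centralSeries_is_ideal_general (hskew : ∀ x y, B x y = -B y x)
    (hjac : ∀ x y z, B (α x) (B y z) + B (α y) (B z x) + B (α z) (B x y) = 0)
    (hmul : ∀ x y, α (B x y) = B (α x) (α y))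
    (hspan : I ⊔ LinearMap.range α = ⊤) (hI : IsHomLieIdeal B α I) (r : ℕ) :
    IsHomLieIdeal B α ((Submodule.map₂ B I)^[r] I) := by
  induction r with
  | zero => exact hI
  | succ r ih =>
    rw [Function.iterate_succ_apply']
    exact hI.map₂ ih hskew hjac hmul hspan

end HomLieIdeal

section CentralSeries

variable {K g : Type*} [Field K] [AddCommGroup g] [Module K g] (B : g →ₗ[K] g →ₗ[K] g)

theorem homLieBracketSpan_eq_map₂ (A C : Submodule K g) :
    homLieBracketSpan B A C = Submodule.map₂ B A C := by
  simp only [homLieBracketSpan, Submodule.map₂_eq_span_image2, Set.image2, SetLike.mem_coe,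
    eq_comm]

theorem homLieCentralSeriesOf_eq_iterate (I : Submodule K g) (r : ℕ) :
    homLieCentralSeriesOf B I r = (Submodule.map₂ B I)^[r] I := by
  induction r with
  | zero => rfl
  | succ r ih =>
    rw [homLieCentralSeriesOf, homLieBracketSpan_eq_map₂, ih, Function.iterate_succ_apply']

end CentralSeries

/-- In a multiplicative Hom-Lie algebra with surjective structure map, each
term of the central descending series of an ideal is an ideal. -/
theorem centralSeries_is_ideal {K g : Type*} [Field K] [AddCommGroup g] [Module K g]
    (B : g →ₗ[K] g →ₗ[K] g) (α : g →ₗ[K] g)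
    (hskew : ∀ x y, B x y = - B y x)
    (hjac : ∀ x y z, B (α x) (B y z) + B (α y) (B z x) + B (α z) (B x y) = 0)
    (hmul : ∀ x y, α (B x y) = B (α x) (α y))
    (hsurj : Function.Surjective α)
    (I : Submodule K g)
    (hI1 : ∀ x : g, ∀ a ∈ I, B x a ∈ I) (hI2 : ∀ a ∈ I, α a ∈ I) :
    ∀ r : ℕ,
      (∀ x : g, ∀ y ∈ homLieCentralSeriesOf B I r, B x y ∈ homLieCentralSeriesOf B I r) ∧
      (∀ y ∈ homLieCentralSeriesOf B I r, α y ∈ homLieCentralSeriesOf B I r) := by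
  intro r
  have hspan : I ⊔ LinearMap.range α = ⊤ := by rw [LinearMap.range_eq_top.mpr hsurj, sup_top_eq]
  have hr := centralSeries_is_ideal_general hskew hjac hmul hspan ⟨hI1, hI2⟩ r
  rw [homLieCentralSeriesOf_eq_iterate]
  exact ⟨hr.bracket_mem, hr.map_mem⟩
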